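/- Fix n ≥ 0. Let Φ₅(n)⁺ be the (2n+2)×(2n+2) matrix over k[X,Y] obtained from Φ₄(n)⁺ by multiplying its column 0 by z₁ and its column 2n+1 by z₂, where Φ₄(n)⁺ is the lower-triangular matrix with rows and columns indexed 0,…,2n+1 whose only nonzero entries are: (0,0) = z₃; (1,0) = −z₄, (1,1) = z₁z₄; for 1 ≤ j ≤ n: (2j, 2j−1) = −z₁z₃, (2j, 2j) = z₂z₃, and (2j+1, 2j−1) = z₁z₄, (2j+1, 2j) = −z₂z₄, (2j+1, 2j+1) = z₁z₄. Then there exists a (2n+2)×(2n+2) matrix Ψ with entries in k[X,Y] such that Φ₅(n)⁺·Ψ = Ψ·Φ₅(n)⁺ = F·I₂ₙ₊₂. -/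

import Mathlib

/-- Coefficient functions of `Φ₅`, indexed by naturals. -/
def phiN {R : Type*} [CommRing R] (z1 z2 z3 z4 : R) (n i j : ℕ) : R :=
  (if j = 0 then z1 else if j = 2 * n + 1 then z2 else 1) *
    (if i = 0 then (if j = 0 then z3 else 0)
      else if i = 1 then
        (if j = 0 then -z4 else if j = 1 then z1 * z4 else 0)
      else if i % 2 = 0 then
        (if j = i - 1 then -(z1 * z3)
         else if j = i then z2 * z3 else 0)
      else
        (if j = i - 2 then z1 * z4
         else if j = i - 1 then -(z2 * z4)
         else if j = i then z1 * z4 else 0))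

/-- Coefficient functions of `Ψ`, indexed by naturals. -/
def psiN {R : Type*} [CommRing R] (z1 z2 z3 z4 : R) (n i j : ℕ) : R :=
  if i = 0 then (if j = 0 then z2 * z4 else 0)
  else if i % 2 = 1 then
    (if i = 2 * n + 1 then 1 else z2) *
      (if j + 1 = i then z4 else if j = i then z3 else 0)
  else (if j = i then z1 * z4 else if j + 2 = i then z1 * z4
    else if j + 1 = i then z1 * z3 else 0)

theorem sum_one {R : Type*} [CommRing R] (m a : ℕ) (ha : a < m) (f : ℕ → R)
    (h : ∀ j, j ≠ a → f j = 0) : ∑ j ∈ Finset.range m, f j = f a := by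
  apply Finset.sum_eq_single_of_mem a (by simpa using ha)
  intro b _ hb
  exact h b hb

theorem sum_two {R : Type*} [CommRing R] (m a : ℕ) (ha : a + 1 < m) (f : ℕ → R)
    (h : ∀ j, j ≠ a → j ≠ a + 1 → f j = 0) :
    ∑ j ∈ Finset.range m, f j = f a + f (a + 1) := by
  rw [← Finset.sum_pair (by omega : a ≠ a + 1)]
  symm
  apply Finset.sum_subset
  · intro x hx
    simp at hx ⊢
    omega
  · intro x _ hx
    simp at hx
    exact h x hx.1 hx.2

theorem sum_three {R : Type*} [CommRing R] (m a : ℕ) (ha : a + 2 < m) (f : ℕ → R)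
    (h : ∀ j, j ≠ a → j ≠ a + 1 → j ≠ a + 2 → f j = 0) :
    ∑ j ∈ Finset.range m, f j = f a + f (a + 1) + f (a + 2) := by
  have e : ∑ j ∈ ({a, a + 1, a + 2} : Finset ℕ), f j = f a + f (a + 1) + f (a + 2) := by
    rw [Finset.sum_insert (by simp), Finset.sum_pair (by omega), add_assoc]
  rw [← e]
  symm
  apply Finset.sum_subset
  · intro x hx
    simp at hx ⊢
    omega
  · intro x _ hx
    simp at hx
    exact h x hx.1 hx.2.1 hx.2.2

theorem idx_cases (i : ℕ) : i = 0 ∨ i = 1 ∨ (∃ a, i = 2 * a + 2) ∨ (∃ a, i = 2 * a + 3) := by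
  rcases Nat.even_or_odd' i with ⟨c, rfl | rfl⟩
  · rcases c with _ | c
    · simp
    · exact Or.inr (Or.inr (Or.inl ⟨c, by ring⟩))
  · rcases c with _ | c
    · simp
    · exact Or.inr (Or.inr (Or.inr ⟨c, by ring⟩))

theorem phi_psi {R : Type*} [CommRing R] (z1 z2 z3 z4 : R) (n i l : ℕ) (hi : i < 2 * n + 2) :
    ∑ j ∈ Finset.range (2 * n + 2), phiN z1 z2 z3 z4 n i j * psiN z1 z2 z3 z4 n j l =
      if i = l then z1 * z2 * z3 * z4 else 0 := by
  rcases idx_cases i with rfl | rfl | ⟨a, rfl⟩ | ⟨a, rfl⟩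
  · rw [sum_one _ 0 (by omega)]
    · unfold phiN psiN
      grind
    · unfold phiN
      grind
  · rw [sum_two _ 0 (by omega)]
    · unfold phiN psiN
      grind
    · unfold phiN
      grind
  · rw [sum_two _ (2 * a + 1) (by omega)]
    · unfold phiN psiN
      grind
    · unfold phiN
      grind
  · rw [sum_three _ (2 * a + 1) (by omega)]
    · unfold phiN psiN
      grind
    · unfold phiN
      grind

theorem psi_phi {R : Type*} [CommRing R] (z1 z2 z3 z4 : R) (n i l : ℕ) (hi : i < 2 * n + 2) :
    ∑ j ∈ Finset.range (2 * n + 2), psiN z1 z2 z3 z4 n i j * phiN z1 z2 z3 z4 n j l =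
      if i = l then z1 * z2 * z3 * z4 else 0 := by
  rcases idx_cases i with rfl | rfl | ⟨a, rfl⟩ | ⟨a, rfl⟩
  · rw [sum_one _ 0 (by omega)]
    · unfold phiN psiN
      grind
    · unfold psiN
      grind
  · rw [sum_two _ 0 (by omega)]
    · unfold phiN psiN
      grind
    · unfold psiN
      grind
  · rw [sum_three _ (2 * a) (by omega)]
    · unfold phiN psiN
      grind
    · unfold psiN
      grind
  · rw [sum_two _ (2 * a + 2) (by omega)]
    · unfold phiN psiN
      grind
    · unfold psiN
      grind

/-- For `n ≥ 0`, the matrix `Φ₅(n)⁺`, obtained from `Φ₄(n)⁺` by multiplying the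
first column by `z₁` and the last column by `z₂`, is part of a matrix
factorization of `F`. -/
theorem stmt_16 {k : Type*} [Field k] (lam : k) (h0 : lam ≠ 0) (h1 : lam ≠ 1)
    (z1 z2 z3 z4 F : MvPolynomial (Fin 2) k)
    (hz1 : z1 = MvPolynomial.X 1) (hz2 : z2 = MvPolynomial.X 0)
    (hz3 : z3 = MvPolynomial.X 0 - MvPolynomial.X 1)
    (hz4 : z4 = MvPolynomial.X 0 - MvPolynomial.C lam * MvPolynomial.X 1)
    (hF : F = z1 * z2 * z3 * z4)
    (n : ℕ)
    (Φ₄ Φ₅ : Matrix (Fin (2 * n + 2)) (Fin (2 * n + 2)) (MvPolynomial (Fin 2) k))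
    (hΦ₄ : ∀ i j : Fin (2 * n + 2), Φ₄ i j =
      if i.val = 0 then (if j.val = 0 then z3 else 0)
      else if i.val = 1 then
        (if j.val = 0 then -z4 else if j.val = 1 then z1 * z4 else 0)
      else if i.val % 2 = 0 then
        (if j.val = i.val - 1 then -(z1 * z3)
         else if j.val = i.val then z2 * z3 else 0)
      else
        (if j.val = i.val - 2 then z1 * z4
         else if j.val = i.val - 1 then -(z2 * z4)
         else if j.val = i.val then z1 * z4 else 0))
    (hΦ₅ : ∀ i j : Fin (2 * n + 2), Φ₅ i j =
      (if j.val = 0 then z1 else if j.val = 2 * n + 1 then z2 else 1) * Φ₄ i j) :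
    ∃ Ψ : Matrix (Fin (2 * n + 2)) (Fin (2 * n + 2)) (MvPolynomial (Fin 2) k),
      Φ₅ * Ψ = F • (1 : Matrix (Fin (2 * n + 2)) (Fin (2 * n + 2)) (MvPolynomial (Fin 2) k)) ∧
      Ψ * Φ₅ = F • (1 : Matrix (Fin (2 * n + 2)) (Fin (2 * n + 2)) (MvPolynomial (Fin 2) k)) := by
  have hΦ : ∀ i j : Fin (2 * n + 2), Φ₅ i j = phiN z1 z2 z3 z4 n i.val j.val := by
    intro i j
    rw [hΦ₅, hΦ₄]
    rfl
  refine ⟨Matrix.of fun i j => psiN z1 z2 z3 z4 n i.val j.val, ?_, ?_⟩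
  · ext1 i l
    have h := phi_psi z1 z2 z3 z4 n i.val l.val i.isLt
    rw [← Fin.sum_univ_eq_sum_range
      (fun j => phiN z1 z2 z3 z4 n i.val j * psiN z1 z2 z3 z4 n j l.val)] at h
    simp only [Matrix.mul_apply, Matrix.of_apply, hΦ, h, Matrix.smul_apply, Matrix.one_apply, hF, Fin.ext_iff,
      smul_eq_mul, mul_ite, mul_one, mul_zero]
  · ext1 i l
    have h := psi_phi z1 z2 z3 z4 n i.val l.val i.isLt
    rw [← Fin.sum_univ_eq_sum_range
      (fun j => psiN z1 z2 z3 z4 n i.val j * phiN z1 z2 z3 z4 n j l.val)] at h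
    simp only [Matrix.mul_apply, Matrix.of_apply, hΦ, h, Matrix.smul_apply, Matrix.one_apply, hF, Fin.ext_iff,
      smul_eq_mul, mul_ite, mul_one, mul_zero]
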